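/- arXiv:2406.07793 — 2 statements merged into one kernel-verified Lean document; each statement's English description precedes it below -/
import Mathlib

section
/- Let k ≥ 2 and let αᵢ, βᵢ, γᵢ ∈ ℝ for i = 1, …, k. Define residᵢ(ε, σ) = αᵢε + βᵢσ − γᵢ, and for i = 1, …, k−1 define pᵢ = αᵢ − α_{i+1}, qᵢ = βᵢ − β_{i+1}, rᵢ = γᵢ − γ_{i+1}; set p₀ = q₀ = r₀ = p_k = q_k = r_k = 0. For τ ≥ 0, define C(τ) = ⋃_{i=1}^{k} { (ε, σ) ∈ ℝ² : p_{i−1}ε + q_{i−1}σ ≥ r_{i−1}, pᵢε + qᵢσ ≤ rᵢ, and |residᵢ(ε, σ)| ≤ τ }. Fix (ε, σ) ∈ ℝ² and let M ∈ ℝ satisfy M ≥ |pⱼε + qⱼσ − rⱼ| for all j = 0, …, k and M ≥ |residᵢ(ε, σ)| − τ for all i = 1, …, k. Then (ε, σ) ∈ C(τ) if and only if there exist s₁, …, s_{k−1} ∈ {0, 1} with s₁ ≥ … ≥ s_{k−1} such that for every i = 1, …, k, writing e_i(s) = (i − 1) − (s₁ + … + s_{i−1}) + (s_i + … + s_{k−1}):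 p_{i−1}ε + q_{i−1}σ ≥ r_{i−1} − M·e_i(s), pᵢε + qᵢσ ≤ rᵢ + M·e_i(s), and |residᵢ(ε, σ)| ≤ τ + M·e_i(s). -/
theorem bigM_coef_eq (k i : ℕ) (hi : 1 ≤ i) (s : ℕ → ℝ) :
    ((i - 1 : ℝ) - (∑ j ∈ Finset.Icc 1 (i - 1), s j)
            + (∑ j ∈ Finset.Icc i (k - 1), s j)) =
    (∑ j ∈ Finset.Icc 1 (i - 1), (1 - s j)) + (∑ j ∈ Finset.Icc i (k - 1), s j) := by
  rw [Finset.sum_sub_distrib]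
  simp [Nat.cast_sub hi]

open Finset in
/-- Big-M mixed-integer reformulation of membership in the piecewise
uncertainty set `C(τ)` with `k` pieces: `(ε, σ) ∈ C(τ)` iff there exist
ordered binary variables `s₁ ≥ … ≥ s_{k-1}` satisfying, for every piece `i`,
the three big-M inequalities with coefficient
`e_i(s) = (i-1) - (s₁ + … + s_{i-1}) + (s_i + … + s_{k-1})`. -/
theorem bigM_general_pieces
    (k : ℕ) (hk : 2 ≤ k) (α β γ : ℕ → ℝ)
    (p q r : ℕ → ℝ)
    (hpdef : ∀ i ∈ Finset.Icc 1 (k - 1), p i = α i - α (i + 1))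
    (hqdef : ∀ i ∈ Finset.Icc 1 (k - 1), q i = β i - β (i + 1))
    (hrdef : ∀ i ∈ Finset.Icc 1 (k - 1), r i = γ i - γ (i + 1))
    (hp0 : p 0 = 0) (hq0 : q 0 = 0) (hr0 : r 0 = 0)
    (hpk : p k = 0) (hqk : q k = 0) (hrk : r k = 0)
    (τ : ℝ) (hτ : 0 ≤ τ) (ε σ : ℝ) (M : ℝ)
    (hMb : ∀ j ≤ k, M ≥ |p j * ε + q j * σ - r j|)
    (hMr : ∀ i ∈ Finset.Icc 1 k, M ≥ |α i * ε + β i * σ - γ i| - τ) :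
    (∃ i ∈ Finset.Icc 1 k,
      p (i - 1) * ε + q (i - 1) * σ ≥ r (i - 1) ∧
      p i * ε + q i * σ ≤ r i ∧
      |α i * ε + β i * σ - γ i| ≤ τ) ↔
    (∃ s : ℕ → ℝ,
      (∀ j ∈ Finset.Icc 1 (k - 1), s j = 0 ∨ s j = 1) ∧
      (∀ j, 1 ≤ j → j + 1 ≤ k - 1 → s (j + 1) ≤ s j) ∧
      (∀ i ∈ Finset.Icc 1 k,
        p (i - 1) * ε + q (i - 1) * σ ≥
          r (i - 1) - M * ((i - 1 : ℝ) - (∑ j ∈ Finset.Icc 1 (i - 1), s j)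
            + (∑ j ∈ Finset.Icc i (k - 1), s j)) ∧
        p i * ε + q i * σ ≤
          r i + M * ((i - 1 : ℝ) - (∑ j ∈ Finset.Icc 1 (i - 1), s j)
            + (∑ j ∈ Finset.Icc i (k - 1), s j)) ∧
        |α i * ε + β i * σ - γ i| ≤
          τ + M * ((i - 1 : ℝ) - (∑ j ∈ Finset.Icc 1 (i - 1), s j)
            + (∑ j ∈ Finset.Icc i (k - 1), s j)))) := by
  constructor
  · rintro ⟨m, hm, h1, h2, h3⟩
    rw [Finset.mem_Icc] at hm
    have hM : 0 ≤ M := le_trans (abs_nonneg _) (hMb 0 (Nat.zero_le _))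
    refine ⟨fun j => if j < m then 1 else 0, ?_, ?_, ?_⟩
    · intro j _
      by_cases h : j < m <;> simp [h]
    · intro j _ _
      dsimp only
      split_ifs <;> first | omega | norm_num
    · intro i hi
      have hi' := Finset.mem_Icc.mp hi
      rw [bigM_coef_eq k i hi'.1]
      set s : ℕ → ℝ := fun j => if j < m then 1 else 0 with hs
      have s0 : ∀ j, 0 ≤ s j := by
        intro j; simp only [hs]; split_ifs <;> norm_num
      have s1 : ∀ j, 0 ≤ 1 - s j := by
        intro j; simp only [hs]; split_ifs <;> norm_num
      have A : 0 ≤ ∑ j ∈ Finset.Icc 1 (i - 1), (1 - s j) :=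
        Finset.sum_nonneg fun j _ => s1 j
      have B : 0 ≤ ∑ j ∈ Finset.Icc i (k - 1), s j :=
        Finset.sum_nonneg fun j _ => s0 j
      by_cases him : i = m
      · subst him
        have hE := mul_nonneg hM (add_nonneg A B)
        exact ⟨by linarith, by linarith, by linarith⟩
      · have hE : 1 ≤ (∑ j ∈ Finset.Icc 1 (i - 1), (1 - s j))
            + (∑ j ∈ Finset.Icc i (k - 1), s j) := by
          rcases lt_or_gt_of_ne him with h | h
          · have := Finset.single_le_sum (f := s) (s := Finset.Icc i (k - 1))
              (fun j _ => s0 j) (a := i) (Finset.mem_Icc.mpr ⟨le_refl _, by omega⟩)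
            have e : s i = 1 := by simp [hs, h]
            linarith
          · have := Finset.single_le_sum (f := fun j => 1 - s j)
              (s := Finset.Icc 1 (i - 1))
              (fun j _ => s1 j) (a := m) (Finset.mem_Icc.mpr ⟨hm.1, by omega⟩)
            have e : s m = 0 := by simp [hs]
            simp only [e] at this
            linarith
        have hME := le_mul_of_one_le_right hM hE
        have b1 := abs_le.mp (hMb (i - 1) (by omega))
        have b2 := abs_le.mp (hMb i hi'.2)
        have b3 := hMr i hi
        exact ⟨by linarith [b1.1], by linarith [b2.2], by linarith⟩
  · rintro ⟨s, hs, hanti, h⟩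
    have hex : ∃ i, 1 ≤ i ∧ (i = k ∨ s i = 0) := ⟨k, by omega, Or.inl rfl⟩
    classical
    obtain ⟨m, ⟨hm1, hm⟩, hmin⟩ : ∃ m, (1 ≤ m ∧ (m = k ∨ s m = 0)) ∧
        ∀ j < m, ¬ (1 ≤ j ∧ (j = k ∨ s j = 0)) :=
      ⟨Nat.find hex, Nat.find_spec hex, fun j hj => Nat.find_min hex hj⟩
    have hmk : m ≤ k := by
      by_contra hc
      exact hmin k (by omega) ⟨by omega, Or.inl rfl⟩
    have hmem : m ∈ Finset.Icc 1 k := Finset.mem_Icc.mpr ⟨hm1, hmk⟩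
    have hone : ∀ j ∈ Finset.Icc 1 (m - 1), 1 - s j = 0 := by
      intro j hj
      rw [Finset.mem_Icc] at hj
      have := hmin j (by omega)
      rcases hs j (Finset.mem_Icc.mpr ⟨hj.1, by omega⟩) with h0 | h0
      · exact absurd ⟨hj.1, Or.inr h0⟩ this
      · rw [h0, sub_self]
    have hzero : ∀ j, m ≤ j → j ≤ k - 1 → s j = 0 := by
      intro j hj
      induction j, hj using Nat.le_induction with
      | base =>
        intro hk1
        rcases hm with h0 | h0
        · omega
        · exact h0
      | succ j hj ih =>
        intro hk1
        have h0 := ih (by omega)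
        have h1 := hanti j (by omega) hk1
        rcases hs (j + 1) (Finset.mem_Icc.mpr ⟨by omega, hk1⟩) with h2 | h2
        · exact h2
        · rw [h0, h2] at h1
          norm_num at h1
    have hm' := h m hmem
    rw [bigM_coef_eq k m hm1, Finset.sum_eq_zero hone,
      Finset.sum_eq_zero (fun j hj => hzero j (Finset.mem_Icc.mp hj).1
        (Finset.mem_Icc.mp hj).2)] at hm'
    simp only [add_zero, mul_zero, sub_zero] at hm'
    exact ⟨m, hmem, hm'⟩
end

section
/- Let αᵢ, βᵢ, γᵢ ∈ ℝ for i = 1, 2, 3, define residᵢ(ε, σ) = αᵢε + βᵢσ − γᵢ, p₁ = α₁ − α₂, q₁ = β₁ − β₂, r₁ = γ₁ − γ₂, p₂ = α₂ − α₃, q₂ = β₂ − β₃, r₂ = γ₂ − γ₃. For τ ≥ 0, define C(τ) as the set of (ε, σ) ∈ ℝ² such that at least one of the following holds: (p₁ε + q₁σ ≤ r₁ and |resid₁| ≤ τ), or (p₁ε + q₁σ ≥ r₁ and p₂ε + q₂σ ≤ r₂ and |resid₂| ≤ τ), or (p₂ε + q₂σ ≥ r₂ and |resid₃| ≤ τ).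 Fix (ε, σ) ∈ ℝ² and let M ∈ ℝ satisfy M ≥ |pⱼε + qⱼσ − rⱼ| for j = 1, 2 and M ≥ |residᵢ(ε, σ)| − τ for i = 1, 2, 3. Then (ε, σ) ∈ C(τ) if and only if there exist s₁, s₂ ∈ {0, 1} with s₁ ≥ s₂ such that: p₁ε + q₁σ ≤ r₁ + M(s₁ + s₂); p₁ε + q₁σ ≥ r₁ − M(1 − s₁ + s₂); p₂ε + q₂σ ≤ r₂ + M(1 − s₁ + s₂); p₂ε + q₂σ ≥ r₂ − M(2 − s₁ − s₂); |resid₁| ≤ τ + M(s₁ + s₂); |resid₂| ≤ τ + M(1 − s₁ + s₂); and |resid₃| ≤ τ + M(2 − s₁ − s₂). -/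
/-- Big-M mixed-integer reformulation of the two-breakpoint (three-line)
uncertainty set `C(τ)` used for the truss equilibrium analysis, with two
ordered binary variables `s₁ ≥ s₂`. -/
theorem bigM_two_breakpoints
    (α₁ β₁ γ₁ α₂ β₂ γ₂ α₃ β₃ γ₃ : ℝ)
    (p₁ q₁ r₁ p₂ q₂ r₂ : ℝ)
    (hp₁ : p₁ = α₁ - α₂) (hq₁ : q₁ = β₁ - β₂) (hr₁ : r₁ = γ₁ - γ₂)
    (hp₂ : p₂ = α₂ - α₃) (hq₂ : q₂ = β₂ - β₃) (hr₂ : r₂ = γ₂ - γ₃)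
    (τ : ℝ) (hτ : 0 ≤ τ) (ε σ : ℝ) (M : ℝ)
    (hM1 : M ≥ |p₁ * ε + q₁ * σ - r₁|)
    (hM2 : M ≥ |p₂ * ε + q₂ * σ - r₂|)
    (hMr1 : M ≥ |α₁ * ε + β₁ * σ - γ₁| - τ)
    (hMr2 : M ≥ |α₂ * ε + β₂ * σ - γ₂| - τ)
    (hMr3 : M ≥ |α₃ * ε + β₃ * σ - γ₃| - τ) :
    ((p₁ * ε + q₁ * σ ≤ r₁ ∧ |α₁ * ε + β₁ * σ - γ₁| ≤ τ) ∨
     (p₁ * ε + q₁ * σ ≥ r₁ ∧ p₂ * ε + q₂ * σ ≤ r₂ ∧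
       |α₂ * ε + β₂ * σ - γ₂| ≤ τ) ∨
     (p₂ * ε + q₂ * σ ≥ r₂ ∧ |α₃ * ε + β₃ * σ - γ₃| ≤ τ)) ↔
    (∃ s₁ s₂ : ℝ, (s₁ = 0 ∨ s₁ = 1) ∧ (s₂ = 0 ∨ s₂ = 1) ∧ s₂ ≤ s₁ ∧
      p₁ * ε + q₁ * σ ≤ r₁ + M * (s₁ + s₂) ∧
      p₁ * ε + q₁ * σ ≥ r₁ - M * (1 - s₁ + s₂) ∧
      p₂ * ε + q₂ * σ ≤ r₂ + M * (1 - s₁ + s₂) ∧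
      p₂ * ε + q₂ * σ ≥ r₂ - M * (2 - s₁ - s₂) ∧
      |α₁ * ε + β₁ * σ - γ₁| ≤ τ + M * (s₁ + s₂) ∧
      |α₂ * ε + β₂ * σ - γ₂| ≤ τ + M * (1 - s₁ + s₂) ∧
      |α₃ * ε + β₃ * σ - γ₃| ≤ τ + M * (2 - s₁ - s₂)) := by
  have hM0 : 0 ≤ M := le_trans (abs_nonneg _) hM1
  obtain ⟨h1, h2⟩ := abs_le.mp hM1
  obtain ⟨h3, h4⟩ := abs_le.mp hM2
  constructor
  · rintro (⟨ha, hb⟩ | ⟨ha, hb, hc⟩ | ⟨ha, hb⟩)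
    · refine ⟨0, 0, Or.inl rfl, Or.inl rfl, le_refl _, ?_, ?_, ?_, ?_, ?_, ?_, ?_⟩ <;> linarith
    · refine ⟨1, 0, Or.inr rfl, Or.inl rfl, zero_le_one, ?_, ?_, ?_, ?_, ?_, ?_, ?_⟩ <;> linarith
    · refine ⟨1, 1, Or.inr rfl, Or.inr rfl, le_refl _, ?_, ?_, ?_, ?_, ?_, ?_, ?_⟩ <;> linarith
  · rintro ⟨s₁, s₂, hs₁ | hs₁, hs₂ | hs₂, hs, g1, g2, g3, g4, g5, g6, g7⟩ <;> subst hs₁ <;> subst hs₂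
    · exact Or.inl ⟨by linarith, by linarith⟩
    · exact absurd hs (by norm_num)
    · exact Or.inr (Or.inl ⟨by linarith, by linarith, by linarith⟩)
    · exact Or.inr (Or.inr ⟨by linarith, by linarith⟩)
end
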